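/- Let φ_ε be a solution of the nonlinear eigenvalue problem (EV_ε), and set ā_ε = (ε a*_ε / 2)^{1/2}. Then there exists 0 < γ < 1 such that, for every m ∈ εℤⁿ ∩ Ω, the oscillation of φ_ε over the sphere ∂B_{ā_ε}(m) is o(ε^γ). -/

import Mathlib

open Set Filter Metric MeasureTheory Topology Asymptotics

noncomputable section

/-- Euclidean space ℝⁿ. -/
abbrev Eucl (n : ℕ) := EuclideanSpace ℝ (Fin n)

/-- The points of the lattice `εℤⁿ`. -/
def latticePts (n : ℕ) (ε : ℝ) : Set (Eucl n) :=
  {m | ∀ i, ∃ z : ℤ, m i = ε * (z : ℝ)}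

/-- The union of closed balls of radius `a` centered at the lattice points `εℤⁿ`
(the periodic holes `T_{a_ε}`). -/
def holes (n : ℕ) (ε a : ℝ) : Set (Eucl n) :=
  ⋃ m ∈ latticePts n ε, closedBall m a

/-- The Laplacian of a function on ℝⁿ (sum of its second partial derivatives). -/
def lap {n : ℕ} (u : Eucl n → ℝ) (x : Eucl n) : ℝ :=
  ∑ i, fderiv ℝ (fun y => fderiv ℝ u y (EuclideanSpace.single i 1)) x
    (EuclideanSpace.single i 1)

/-- The harmonic capacity of a compact set, via the Dirichlet energy characterization
(which agrees with the flux of the capacitary potential through the boundary). -/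
def capacity (n : ℕ) (K : Set (Eucl n)) : ℝ :=
  sInf {c | ∃ v : Eucl n → ℝ, ContDiff ℝ (⊤ : ℕ∞) v ∧ HasCompactSupport v ∧
    (∀ x ∈ K, 1 ≤ v x) ∧ c = ∫ x, ‖fderiv ℝ v x‖ ^ 2}

/-- The critical scale `a*_ε = ε^(n/(n-2))` (for `n ≥ 3`). -/
def aStar (n : ℕ) (ε : ℝ) : ℝ := ε ^ ((n : ℝ) / ((n : ℝ) - 2))

/-- A set has smooth boundary: it is the strict sublevel set of a smooth function with
nonvanishing differential on the boundary. -/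
def HasSmoothBoundary {n : ℕ} (Ω : Set (Eucl n)) : Prop :=
  ∃ f : Eucl n → ℝ, ContDiff ℝ (⊤ : ℕ∞) f ∧ Ω = {x | f x < 0} ∧
    ∀ x ∈ frontier Ω, fderiv ℝ f x ≠ 0

/-- The heat operator `H[ψ] = Δψ - ∂_t ψ` applied to a space-time function. -/
def heatOp {n : ℕ} (ψ : Eucl n → ℝ → ℝ) (x : Eucl n) (t : ℝ) : ℝ :=
  lap (fun y => ψ y t) x - deriv (fun s => ψ x s) t

/-- `u` is a viscosity supersolution of `F[u] = 0` on `Q`: whenever a smooth test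
function touches `u` from below at a point of `Q`, the operator evaluated on the test
function is `≤ 0` there. -/
def ViscSupersol {n : ℕ} (F : (Eucl n → ℝ → ℝ) → Eucl n → ℝ → ℝ)
    (Q : Set (Eucl n × ℝ)) (u : Eucl n → ℝ → ℝ) : Prop :=
  ∀ ψ : Eucl n → ℝ → ℝ, ContDiff ℝ (⊤ : ℕ∞) (fun p : Eucl n × ℝ => ψ p.1 p.2) →
    ∀ p ∈ Q, ψ p.1 p.2 = u p.1 p.2 → (∀ᶠ q in 𝓝[Q] p, ψ q.1 q.2 ≤ u q.1 q.2) →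
      F ψ p.1 p.2 ≤ 0

/-- `u` is a viscosity subsolution of `F[u] = 0` on `Q`. -/
def ViscSubsol {n : ℕ} (F : (Eucl n → ℝ → ℝ) → Eucl n → ℝ → ℝ)
    (Q : Set (Eucl n × ℝ)) (u : Eucl n → ℝ → ℝ) : Prop :=
  ∀ ψ : Eucl n → ℝ → ℝ, ContDiff ℝ (⊤ : ℕ∞) (fun p : Eucl n × ℝ => ψ p.1 p.2) →
    ∀ p ∈ Q, ψ p.1 p.2 = u p.1 p.2 → (∀ᶠ q in 𝓝[Q] p, u q.1 q.2 ≤ ψ q.1 q.2) →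
      0 ≤ F ψ p.1 p.2

/-- The highly oscillating obstacle `φ_ε = φ · χ_{T_{a_ε}}`. -/
def oscObstacle (n : ℕ) (ε a : ℝ) (φ : Eucl n → ℝ → ℝ) : Eucl n → ℝ → ℝ :=
  fun x t => (holes n ε a).indicator (fun y => φ y t) x

/-- `u` is a viscosity supersolution of the heat equation on `Q_T = Ω × (0,T]`, above the
obstacle `obst`, vanishing on the lateral boundary, with initial data `g`. -/
def IsSupersolHeatObstacle {n : ℕ} (Ω : Set (Eucl n)) (T : ℝ)
    (obst : Eucl n → ℝ → ℝ) (g : Eucl n → ℝ) (u : Eucl n → ℝ → ℝ) : Prop :=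
  ViscSupersol heatOp (Ω ×ˢ Ioc 0 T) u ∧
  (∀ x ∈ frontier Ω, ∀ t ∈ Ioc (0:ℝ) T, u x t = 0) ∧
  (∀ x ∈ Ω, ∀ t ∈ Ioc (0:ℝ) T, obst x t ≤ u x t) ∧
  (∀ x ∈ Ω, u x 0 = g x)

/-- `u` is the least viscosity supersolution of the obstacle problem. -/
def IsLeastSupersolHeatObstacle {n : ℕ} (Ω : Set (Eucl n)) (T : ℝ)
    (obst : Eucl n → ℝ → ℝ) (g : Eucl n → ℝ) (u : Eucl n → ℝ → ℝ) : Prop :=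
  IsSupersolHeatObstacle Ω T obst g u ∧
  ∀ v, IsSupersolHeatObstacle Ω T obst g v →
    ∀ x ∈ Ω, ∀ t ∈ Ioc (0:ℝ) T, u x t ≤ v x t

/-- Difference quotient of size `ε` in direction `e`. -/
def dquot {n : ℕ} (ε : ℝ) (e : Eucl n) (f : Eucl n → ℝ) (x : Eucl n) : ℝ :=
  (f (x + ε • e) - f x) / ε

/-- Norm of the discrete gradient `‖Δ^ε_e f(x)‖ = (Σ_i |Δ^ε_{e_i} f(x)|²)^{1/2}`. -/
def dgradNorm {n : ℕ} (ε : ℝ) (f : Eucl n → ℝ) (x : Eucl n) : ℝ :=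
  Real.sqrt (∑ i, (dquot ε (EuclideanSpace.single i 1) f x) ^ 2)

/-- A unit lattice direction `e ∈ ℤⁿ`, `|e| = 1`. -/
def UnitLatticeDir (n : ℕ) (e : Eucl n) : Prop :=
  e ∈ latticePts n 1 ∧ ‖e‖ = 1

/-- The `ε`-periodic corrector : `Δw = k` outside the holes of radius `a`,
`w = 1` on the holes. -/
def IsCorrector (n : ℕ) (ε a k : ℝ) (w : Eucl n → ℝ) : Prop :=
  Continuous w ∧ ContDiffOn ℝ 2 w (holes n ε a)ᶜ ∧
  (∀ x ∉ holes n ε a, lap w x = k) ∧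
  (∀ x ∈ holes n ε a, w x = 1) ∧
  (∀ m ∈ latticePts n ε, ∀ x, w (x + m) = w x)

/-- `liminf_{ε→0} inf_{x} w_ε(x)`, computed in the extended reals. -/
def liminfInf (n : ℕ) (w : ℝ → Eucl n → ℝ) : EReal :=
  Filter.liminf (fun ε => ⨅ x, ((w ε x : ℝ) : EReal)) (𝓝[>] (0:ℝ))

/-- Solution of the nonlinear eigenvalue problem (EV_ε) in the perforated domain
with holes of radius `a`, extended by zero outside `Ω_{a}`. -/
def IsEVSol (n : ℕ) (Ω : Set (Eucl n)) (ε a p : ℝ) (φ : Eucl n → ℝ) : Prop :=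
  ContinuousOn φ (closure Ω) ∧
  ContDiffOn ℝ 2 φ (Ω \ holes n ε a) ∧
  (∀ x ∈ Ω \ holes n ε a, lap φ x + φ x ^ p = 0) ∧
  (∀ x ∈ Ω \ holes n ε a, 0 < φ x) ∧
  (∀ x, x ∉ Ω \ holes n ε a → φ x = 0)

/-- Elliptic viscosity supersolution of `F[u] = 0` on `D`. -/
def ViscSupersolE {n : ℕ} (F : (Eucl n → ℝ) → Eucl n → ℝ) (D : Set (Eucl n))
    (u : Eucl n → ℝ) : Prop :=
  ∀ ψ : Eucl n → ℝ, ContDiff ℝ (⊤ : ℕ∞) ψ → ∀ x ∈ D, ψ x = u x →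
    (∀ᶠ y in 𝓝[D] x, ψ y ≤ u y) → F ψ x ≤ 0

/-- Elliptic viscosity subsolution of `F[u] = 0` on `D`. -/
def ViscSubsolE {n : ℕ} (F : (Eucl n → ℝ) → Eucl n → ℝ) (D : Set (Eucl n))
    (u : Eucl n → ℝ) : Prop :=
  ∀ ψ : Eucl n → ℝ, ContDiff ℝ (⊤ : ℕ∞) ψ → ∀ x ∈ D, ψ x = u x →
    (∀ᶠ y in 𝓝[D] x, u y ≤ ψ y) → 0 ≤ F ψ x

/-- The ε-periodic smooth cutoff `ξ` used for the initial data of (PME_ε). -/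
def PMECutoff (n : ℕ) (ε : ℝ) (ξ : Eucl n → ℝ) : Prop :=
  ContDiff ℝ (⊤ : ℕ∞) ξ ∧ (∀ x, 0 ≤ ξ x ∧ ξ x ≤ 1) ∧
  (∀ x ∈ holes n ε (aStar n ε), ξ x = 0) ∧
  (∀ x ∉ holes n ε (ε ^ (((n : ℝ) - 1) / ((n : ℝ) - 2))), ξ x = 1) ∧
  (∀ x ∈ holes n ε (ε ^ (((n : ℝ) - 1) / ((n : ℝ) - 2))) \ holes n ε (aStar n ε),
    lap ξ x = 0) ∧
  (∀ x, lap ξ x ≤ 0) ∧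
  (∀ i : Fin n, ∀ x, ξ (x + ε • EuclideanSpace.single i 1) = ξ x)

/-- The smooth initial data `g` for (PME_ε): vanishing outside `Ω` and with
nondegenerate gradient on `∂Ω`. -/
def PMEData (n : ℕ) (Ω : Set (Eucl n)) (δ₀ C : ℝ) (g : Eucl n → ℝ) : Prop :=
  ContDiff ℝ (⊤ : ℕ∞) g ∧ HasCompactSupport g ∧ tsupport g ⊆ closure Ω ∧
  ∀ x ∈ frontier Ω, δ₀ < ‖fderiv ℝ g x‖ ∧ ‖fderiv ℝ g x‖ < C

/-- `u` solves the porous medium problem (PME_ε) in the perforated domain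
`Q_{T,a*_ε} = Ω_{a*_ε} × (0,T]`, with lateral boundary value 0 and initial data `gε`. -/
def IsPMESol (n : ℕ) (Ω : Set (Eucl n)) (T ε m : ℝ) (gε : Eucl n → ℝ)
    (u : Eucl n → ℝ → ℝ) : Prop :=
  ContinuousOn (fun pr : Eucl n × ℝ => u pr.1 pr.2)
    (closure (Ω \ holes n ε (aStar n ε)) ×ˢ Icc 0 T) ∧
  (∀ x ∈ Ω \ holes n ε (aStar n ε), ∀ t ∈ Ioc (0:ℝ) T,
    lap (fun y => u y t ^ m) x - deriv (fun s => u x s) t = 0) ∧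
  (∀ x ∈ frontier (Ω \ holes n ε (aStar n ε)), ∀ t ∈ Ioc (0:ℝ) T, u x t = 0) ∧
  (∀ x ∈ Ω \ holes n ε (aStar n ε), u x 0 = gε x)

/-!
Comparison with a paraboloid and sublinearity of the source bound `φ_ε` by a constant `M`
independent of `ε`, whatever the holes; hence `-M ^ p ≤ Δ φ_ε ≤ 0` off the holes. Comparison with a
multiple of the barrier `1 - exp (c * f)`, for `f` a defining function of `Ω`, gives
`φ_ε ≤ L * dist (·, Ωᶜ)`, so that `φ_ε = O(ε)` in the cells of the lattice that meet `Ωᶜ`.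

In a cell contained in `Ω`, take two points `p₁, p₂` of the sphere of radius `s` about the lattice
point `m`, and let `A` be the reflection fixing `m` that swaps them. The difference `φ_ε - φ_ε ∘ A`
vanishes on the hyperplane fixed by `A` and on the hole, because the hole is a ball about `m`; so on
the half-ball of radius `ε / 2` it lies below a quadratic barrier of size `O(s / ε + ε ^ 2)` on the
sphere. For `s = (ε a*_ε / 2) ^ (1/2)` this is `O(ε ^ (1 / (n - 2)))`.
-/

section Laplacian

open Laplacian InnerProductSpace Module

variable {E : Type*} [NormedAddCommGroup E] [InnerProductSpace ℝ E] [FiniteDimensional ℝ E]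

theorem laplacian_eq_sum_fderiv_fderiv {ι : Type*} [Fintype ι] (b : OrthonormalBasis ι ℝ E)
    (f : E → ℝ) (x : E) : Δ f x = ∑ i, fderiv ℝ (fderiv ℝ f) x (b i) (b i) := by
  simp [laplacian_eq_iteratedFDeriv_orthonormalBasis f b, iteratedFDeriv_two_apply]

theorem laplacian_comp {g : ℝ → ℝ} {f : E → ℝ} {x : E} (hg : ContDiffAt ℝ 2 g (f x))
    (hf : ContDiffAt ℝ 2 f x) :
    Δ (g ∘ f) x = deriv (deriv g) (f x) * ‖fderiv ℝ f x‖ ^ 2 + deriv g (f x) * Δ f x := by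
  have hgf : fderiv ℝ (g ∘ f) =ᶠ[𝓝 x] (deriv g ∘ f) • fderiv ℝ f := by
    filter_upwards [hf.continuousAt.eventually (hg.eventually (by simp)), hf.eventually (by simp)]
      with y hgy hfy
    exact ((hgy.differentiableAt two_ne_zero).hasDerivAt.comp_hasFDerivAt y
      (hfy.differentiableAt two_ne_zero).hasFDerivAt).fderiv
  have hg' : HasDerivAt (deriv g) (deriv (deriv g) (f x)) (f x) :=
    ((hg.derivWithin (m := 1) (by norm_num)).differentiableAt one_ne_zero).hasDerivAt
  have hf' : HasFDerivAt (fderiv ℝ f) (fderiv ℝ (fderiv ℝ f) x) x :=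
    ((hf.fderiv_right (m := 1) (by norm_num)).differentiableAt one_ne_zero).hasFDerivAt
  have h := (hg'.comp_hasFDerivAt x (hf.differentiableAt two_ne_zero).hasFDerivAt).smul hf'
  let b := stdOrthonormalBasis ℝ E
  rw [laplacian_eq_sum_fderiv_fderiv b, laplacian_eq_sum_fderiv_fderiv b,
    b.norm_dual, hgf.fderiv_eq, h.fderiv, Finset.mul_sum, Finset.mul_sum,
    ← Finset.sum_add_distrib]
  refine Finset.sum_congr rfl fun i _ => ?_
  simp
  ring

theorem laplacian_const_add_mul_norm_sub_sq (c b : ℝ) (m x : E) :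
    Δ (fun y => c + b * ‖y - m‖ ^ 2) x = 2 * finrank ℝ E * b := by
  have h : fderiv ℝ (fun y : E => c + b * ‖y - m‖ ^ 2) =
      fun y => (2 * b) • innerSL ℝ (y - m) := by
    funext y
    refine ((((hasFDerivAt_id y).sub_const m).norm_sq.const_mul b).const_add c).fderiv.trans ?_
    ext v
    simp
    ring
  have h' : HasFDerivAt (fun y => (2 * b) • innerSL ℝ (y - m)) ((2 * b) • innerSL ℝ) x :=
    ((innerSL ℝ).hasFDerivAt.comp x ((hasFDerivAt_id x).sub_const m)).const_smul (2 * b)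
  rw [laplacian_eq_sum_fderiv_fderiv (stdOrthonormalBasis ℝ E), h, h'.fderiv]
  change ∑ i, 2 * b * ⟪stdOrthonormalBasis ℝ E i, stdOrthonormalBasis ℝ E i⟫_ℝ = _
  simp only [OrthonormalBasis.inner_eq_one, mul_one, Finset.sum_const, Finset.card_univ,
    Fintype.card_fin, nsmul_eq_mul]
  ring

theorem laplacian_comp_inner_sub {k : ℝ → ℝ} (hk : ContDiff ℝ 2 k) (m e x : E) :
    Δ (fun y => k ⟪y - m, e⟫_ℝ) x = deriv (deriv k) ⟪x - m, e⟫_ℝ * ‖e‖ ^ 2 := by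
  have h (y : E) : HasFDerivAt (fun y : E => ⟪y - m, e⟫_ℝ) (innerSL ℝ e) y := by
    simpa [real_inner_comm, Function.comp_def] using
      (innerSL ℝ e).hasFDerivAt.comp y ((hasFDerivAt_id y).sub_const m)
  have h' : fderiv ℝ (fun y : E => ⟪y - m, e⟫_ℝ) = fun _ => innerSL ℝ e :=
    funext fun y => (h y).fderiv
  have := laplacian_comp (f := fun y : E => ⟪y - m, e⟫_ℝ) (x := x) hk.contDiffAt
    ((contDiff_id.sub contDiff_const).inner ℝ contDiff_const).contDiffAt
  simpa [h', laplacian_eq_sum_fderiv_fderiv (stdOrthonormalBasis ℝ E), Function.comp_def] using this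

theorem laplacian_comp_affineIsometryEquiv (A : E ≃ᵃⁱ[ℝ] E) (f : E → ℝ) (x : E) :
    Δ (f ∘ A) x = Δ f (A x) := by
  let L : E ≃L[ℝ] E := A.linearIsometryEquiv.toContinuousLinearEquiv
  have hA (y : E) : A y = L y + A 0 := by simpa [L] using A.map_vadd 0 y
  have hfA : f ∘ A = (fun z => f (z + A 0)) ∘ L := by
    funext y
    simp [hA y]
  have hcomp : iteratedFDeriv ℝ 2 (f ∘ A) x =
      (iteratedFDeriv ℝ 2 f (A x)).compContinuousLinearMap fun _ => L := by
    rw [hA x, ← iteratedFDeriv_comp_add_right, hfA]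
    simpa only [iteratedFDerivWithin_univ, preimage_univ] using
      L.iteratedFDerivWithin_comp_right (fun z => f (z + A 0)) uniqueDiffOn_univ (mem_univ _) 2
  let b := stdOrthonormalBasis ℝ E
  rw [laplacian_eq_iteratedFDeriv_orthonormalBasis _ b,
    laplacian_eq_iteratedFDeriv_orthonormalBasis _ (b.map A.linearIsometryEquiv)]
  refine Finset.sum_congr rfl fun i _ => ?_
  have hb : (fun j => L (![b i, b i] j)) = ![L (b i), L (b i)] := by
    funext j
    fin_cases j <;> rfl
  rw [hcomp]
  exact congrArg (iteratedFDeriv ℝ 2 f (A x)) hb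

theorem deriv_deriv_nonpos_of_isLocalMax {h : ℝ → ℝ} {a : ℝ} (hmax : IsLocalMax h a)
    (hc : ContinuousAt h a) : deriv (deriv h) a ≤ 0 := by
  by_contra! hpos
  have hmin : IsLocalMin h a := isLocalMin_of_deriv_deriv_pos hpos hmax.deriv_eq_zero hc
  have hconst : h =ᶠ[𝓝 a] fun _ => h a := by
    filter_upwards [hmax, hmin] with t h₁ h₂ using le_antisymm h₁ h₂
  have : deriv (deriv h) a = 0 := by simpa using hconst.deriv.deriv_eq
  exact hpos.ne' this

omit [FiniteDimensional ℝ E] in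
theorem fderiv_fderiv_nonpos_of_isLocalMax {f : E → ℝ} {x : E} (hmax : IsLocalMax f x)
    (hf : ContDiffAt ℝ 2 f x) (e : E) : fderiv ℝ (fderiv ℝ f) x e e ≤ 0 := by
  let γ : ℝ → E := fun t => x + t • e
  have hγ (t : ℝ) : HasDerivAt γ e t := by
    simpa [γ] using ((hasDerivAt_id t).smul_const e).const_add x
  have hγ0 : γ 0 = x := by simp [γ]
  have hγx : Tendsto γ (𝓝 0) (𝓝 x) := hγ0 ▸ (hγ 0).continuousAt
  have hderiv : deriv (f ∘ γ) =ᶠ[𝓝 0] fun t => fderiv ℝ f (γ t) e := by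
    filter_upwards [hγx.eventually (hf.eventually (by simp))] with t ht
    exact ((ht.differentiableAt two_ne_zero).hasFDerivAt.comp_hasDerivAt t (hγ t)).deriv
  have hf' : HasFDerivAt (fderiv ℝ f) (fderiv ℝ (fderiv ℝ f) x) (γ 0) :=
    hγ0 ▸ ((hf.fderiv_right (m := 1) (by norm_num)).differentiableAt one_ne_zero).hasFDerivAt
  have hderiv₂ : deriv (deriv (f ∘ γ)) 0 = fderiv ℝ (fderiv ℝ f) x e e := by
    rw [hderiv.deriv_eq]
    simpa using ((hf'.comp_hasDerivAt 0 (hγ 0)).clm_apply (hasDerivAt_const 0 e)).deriv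
  rw [← hderiv₂]
  have hmax0 : IsLocalMax f (γ 0) := hγ0.symm ▸ hmax
  have hf0 : ContinuousAt f (γ 0) := hγ0.symm ▸ hf.continuousAt
  exact deriv_deriv_nonpos_of_isLocalMax (hmax0.comp_continuous (hγ 0).continuousAt)
    (hf0.comp (hγ 0).continuousAt)

theorem laplacian_nonpos_of_isLocalMax {f : E → ℝ} {x : E} (hmax : IsLocalMax f x)
    (hf : ContDiffAt ℝ 2 f x) : Δ f x ≤ 0 := by
  rw [laplacian_eq_sum_fderiv_fderiv (stdOrthonormalBasis ℝ E)]
  exact Finset.sum_nonpos fun i _ => fderiv_fderiv_nonpos_of_isLocalMax hmax hf _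

theorem le_of_forall_le_or_laplacian_lt {K : Set E} (hK : IsCompact K) {u w : E → ℝ}
    (hu : ContinuousOn u K) (hw : ContinuousOn w K)
    (h : ∀ x ∈ K, u x ≤ w x ∨
      K ∈ 𝓝 x ∧ ContDiffAt ℝ 2 u x ∧ ContDiffAt ℝ 2 w x ∧ Δ w x < Δ u x) :
    ∀ x ∈ K, u x ≤ w x := by
  intro x hx
  obtain ⟨z, hzK, hz⟩ := hK.exists_isMaxOn ⟨x, hx⟩ (hu.sub hw)
  suffices u z ≤ w z by
    have := hz hx
    simp only [mem_ofPred_eq, Pi.sub_apply] at this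
    linarith
  rcases h z hzK with hle | ⟨hKz, huz, hwz, hlt⟩
  · exact hle
  · have hΔ := laplacian_nonpos_of_isLocalMax (hz.isLocalMax hKz) (huz.sub hwz)
    rw [huz.laplacian_sub hwz] at hΔ
    linarith

/-! ### Barriers for the Dirichlet problem -/

theorem continuous_laplacian {f : E → ℝ} (hf : ContDiff ℝ 2 f) : Continuous (Δ f) := by
  have hf'' : Continuous (fderiv ℝ (fderiv ℝ f)) :=
    (hf.fderiv_right (m := 1) (by norm_num)).continuous_fderiv one_ne_zero
  rw [funext (laplacian_eq_sum_fderiv_fderiv (stdOrthonormalBasis ℝ E) f)]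
  exact continuous_finsetSum _ fun i _ =>
    (hf''.clm_apply continuous_const).clm_apply continuous_const

/-- The positive part of `u` is a subsolution of the Dirichlet problem `-Δu = N` in `Ω`, `u = 0` on
`∂Ω`. Regularity and the inequality are required only where `u` is positive, so that a function
extended by zero over holes in `Ω` qualifies on all of `Ω`. -/
structure IsDirichletSubsol (Ω : Set E) (N : ℝ) (u : E → ℝ) : Prop where
  continuousOn : ContinuousOn u (closure Ω)
  mem_of_pos : ∀ x ∈ closure Ω, 0 < u x → x ∈ Ω
  contDiffAt_of_pos : ∀ x ∈ Ω, 0 < u x → ContDiffAt ℝ 2 u x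
  le_laplacian_of_pos : ∀ x ∈ Ω, 0 < u x → -N ≤ Δ u x

/-- `w` is a barrier at the boundary of `Ω`: it defines `Ω` as the set where it is positive, and it
is strictly superharmonic at the boundary points. -/
structure IsBoundaryBarrier (Ω : Set E) (w : E → ℝ) : Prop where
  contDiff : ContDiff ℝ 2 w
  mem_iff : ∀ x, x ∈ Ω ↔ 0 < w x
  laplacian_neg : ∀ x ∈ frontier Ω, Δ w x < 0

namespace IsDirichletSubsol

variable {Ω : Set E} {N : ℝ} {u : E → ℝ}

theorem le_of_barrier (hu : IsDirichletSubsol Ω N u) (hΩo : IsOpen Ω)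
    (hΩb : Bornology.IsBounded Ω) {w : E → ℝ} (hw : ContDiff ℝ 2 w)
    (hw0 : ∀ x ∈ closure Ω, 0 ≤ w x) (h : ∀ x ∈ Ω, u x ≤ w x ∨ Δ w x < -N) :
    ∀ x ∈ closure Ω, u x ≤ w x := by
  refine le_of_forall_le_or_laplacian_lt hΩb.isCompact_closure hu.continuousOn
    hw.continuous.continuousOn fun x hx => ?_
  rcases le_or_gt (u x) 0 with hux | hux
  · exact .inl (hux.trans (hw0 x hx))
  · have hxΩ := hu.mem_of_pos x hx hux
    exact (h x hxΩ).imp_right fun hlt =>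
      ⟨mem_of_superset (hΩo.mem_nhds hxΩ) subset_closure, hu.contDiffAt_of_pos x hxΩ hux,
        hw.contDiffAt, hlt.trans_le (hu.le_laplacian_of_pos x hxΩ hux)⟩

theorem le_mul_sq [Nontrivial E] (hu : IsDirichletSubsol Ω N u) (hΩo : IsOpen Ω) {R : ℝ}
    (hR : closure Ω ⊆ closedBall 0 R) (hN : 0 < N) : ∀ x ∈ closure Ω, u x ≤ N * R ^ 2 := by
  have hd : (1 : ℝ) ≤ finrank ℝ E := mod_cast finrank_pos
  have hnorm {x : E} (hx : x ∈ closure Ω) : ‖x - 0‖ ^ 2 ≤ R ^ 2 := by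
    gcongr
    simpa using hR hx
  intro x hx
  have hux : u x ≤ N * R ^ 2 + -N * ‖x - 0‖ ^ 2 := by
    refine hu.le_of_barrier (w := fun x => N * R ^ 2 + -N * ‖x - 0‖ ^ 2) hΩo
      (isBounded_closedBall.subset (subset_closure.trans hR))
      (contDiff_const.add (contDiff_const.mul ((contDiff_id.sub contDiff_const).norm_sq ℝ)))
      (fun y hy => ?_) (fun y _ => .inr ?_) x hx
    · nlinarith [hnorm hy]
    · rw [laplacian_const_add_mul_norm_sub_sq]
      nlinarith
  exact hux.trans (by nlinarith [sq_nonneg ‖x - 0‖])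

theorem exists_le_mul_barrier (hΩo : IsOpen Ω) (hΩb : Bornology.IsBounded Ω) {w : E → ℝ}
    (hw : IsBoundaryBarrier Ω w) (M N : ℝ) :
    ∃ A > 0, ∀ u, IsDirichletSubsol Ω N u → (∀ x ∈ Ω, u x ≤ M) →
      ∀ x ∈ closure Ω, u x ≤ A * w x := by
  have hpos : ∀ x ∈ closure Ω, 0 < max (w x) (-Δ w x) := fun x hx => by
    by_cases hxΩ : x ∈ Ω
    · exact lt_max_of_lt_left ((hw.mem_iff x).1 hxΩ)
    · exact lt_max_of_lt_right (neg_pos.2 (hw.laplacian_neg x (hΩo.frontier_eq ▸ ⟨hx, hxΩ⟩)))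
  obtain ⟨c, hc, hcw⟩ := hΩb.isCompact_closure.exists_forall_le'
    (hw.contDiff.continuous.max (continuous_laplacian hw.contDiff).neg).continuousOn hpos
  have hw0 : ∀ x ∈ closure Ω, 0 ≤ w x := fun x hx =>
    closure_minimal (fun y hy => ((hw.mem_iff y).1 hy).le)
      (isClosed_le continuous_const hw.contDiff.continuous) hx
  let A := (|M| + |N| + 1) / c
  have hA : 0 < A := by positivity
  have hAc : A * c = |M| + |N| + 1 := div_mul_cancel₀ _ hc.ne'
  have hM : M ≤ A * c := by linarith [le_abs_self M, abs_nonneg N]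
  have hN : N < A * c := by linarith [le_abs_self N, abs_nonneg M]
  refine ⟨A, hA, fun u hu huM => hu.le_of_barrier hΩo hΩb (contDiff_const.mul hw.contDiff)
    (fun x hx => mul_nonneg hA.le (hw0 x hx)) fun x hx => ?_⟩
  refine (le_max_iff.1 (hcw x (subset_closure hx))).imp (fun hcx => ?_) fun hcx => ?_
  · exact (huM x hx).trans (hM.trans (by gcongr))
  · have hΔ : Δ (fun x => A * w x) x = A * Δ w x := laplacian_smul A hw.contDiff.contDiffAt
    have hAΔ : A * c ≤ A * -Δ w x := by gcongr; exact hcx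
    linarith

theorem exists_le_mul_dist (hΩo : IsOpen Ω) (hΩb : Bornology.IsBounded Ω) {w : E → ℝ}
    (hw : IsBoundaryBarrier Ω w) (M N : ℝ) :
    ∃ L ≥ 0, ∀ u, IsDirichletSubsol Ω N u → (∀ x ∈ Ω, u x ≤ M) →
      ∀ x ∈ Ω, ∀ y ∉ Ω, u x ≤ L * dist x y := by
  obtain ⟨A, hA, hAw⟩ := exists_le_mul_barrier hΩo hΩb hw M N
  obtain ⟨k, hk⟩ := ((hw.contDiff.of_le one_le_two).locallyLipschitz.locallyLipschitzOn
    (s := closure Ω)).exists_lipschitzOnWith_of_compact hΩb.isCompact_closure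
  refine ⟨A * k, by positivity, fun u hu hM x hx y hy => ?_⟩
  obtain ⟨z, hz, hxz⟩ := exists_mem_frontier_infDist_compl_eq_dist hx fun h => hy (h ▸ mem_univ y)
  have hwz : w z ≤ 0 := by
    rw [hΩo.frontier_eq] at hz
    simpa [hw.mem_iff] using hz.2
  calc u x ≤ A * w x := hAw u hu hM x (subset_closure hx)
    _ ≤ A * (w x - w z) := by gcongr; linarith
    _ ≤ A * (k * dist x z) := by
      gcongr
      exact (le_abs_self _).trans
        (hk.dist_le_mul x (subset_closure hx) z (frontier_subset_closure hz))
    _ ≤ A * (k * dist x y) := by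
      gcongr
      exact hxz ▸ infDist_le_dist_of_mem hy
    _ = A * k * dist x y := by ring

end IsDirichletSubsol

theorem exists_isBoundaryBarrier_of_fderiv_ne_zero {Ω : Set E}
    (hΩb : Bornology.IsBounded Ω) {f : E → ℝ} (hf : ContDiff ℝ 2 f) (hΩf : Ω = {x | f x < 0})
    (hf' : ∀ x ∈ frontier Ω, fderiv ℝ f x ≠ 0) :
    ∃ w, IsBoundaryBarrier Ω w := by
  have hcont : ContinuousOn (fun x => Δ f x / ‖fderiv ℝ f x‖ ^ 2) (frontier Ω) :=
    (continuous_laplacian hf).continuousOn.div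
      ((hf.continuous_fderiv two_ne_zero).norm.pow 2).continuousOn fun x hx => by
        simpa using hf' x hx
  obtain ⟨C, hC⟩ := (hΩb.isCompact_closure.of_isClosed_subset isClosed_frontier
    frontier_subset_closure).exists_bound_of_continuousOn hcont
  let c := |C| + 1
  have hc : 0 < c := by positivity
  let g : ℝ → ℝ := fun t => 1 - Real.exp (c * t)
  have hg : ContDiff ℝ 2 g := by fun_prop
  have hg' : deriv g = fun t => -(Real.exp (c * t) * c) := by
    funext t
    simpa [g] using ((((hasDerivAt_id t).const_mul c).exp).const_sub 1).deriv
  have hg'' (t : ℝ) : deriv (deriv g) t = -(Real.exp (c * t) * c * c) := by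
    rw [hg']
    simpa using ((((hasDerivAt_id t).const_mul c).exp).mul_const c).neg.deriv
  refine ⟨g ∘ f, hg.comp hf, ?_, fun x hx => ?_⟩
  · simp [hΩf, g, mul_neg_iff, hc, hc.le]
  · have hpos : 0 < ‖fderiv ℝ f x‖ ^ 2 := pow_pos (norm_pos_iff.2 (hf' x hx)) 2
    have hΔf : 0 < c * ‖fderiv ℝ f x‖ ^ 2 + Δ f x := by
      have := (neg_le_abs _).trans (hC x hx)
      rw [← neg_div, div_le_iff₀ hpos] at this
      nlinarith [le_abs_self C]
    rw [laplacian_comp hg.contDiffAt hf.contDiffAt, hg'', hg']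
    nlinarith [mul_pos (mul_pos (Real.exp_pos (c * f x)) hc) hΔf]

/-! ### Oscillation over a sphere around a hole -/

omit [FiniteDimensional ℝ E] in
theorem exists_affineIsometryEquiv_swap {m p₁ p₂ : E} (h : ‖p₁ - m‖ = ‖p₂ - m‖) :
    ∃ A : E ≃ᵃⁱ[ℝ] E, A p₁ = p₂ ∧ A m = m ∧ ∀ y, ⟪y - m, p₁ - p₂⟫_ℝ = 0 → A y = y := by
  let R := (ℝ ∙ (p₁ - p₂))ᗮ.reflection
  let A := (AffineIsometryEquiv.vaddConst ℝ m).symm.trans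
    (R.toAffineIsometryEquiv.trans (AffineIsometryEquiv.vaddConst ℝ m))
  have hA (y : E) : A y = R (y - m) + m := by simp [A]
  refine ⟨A, ?_, by simp [hA], fun y hy => ?_⟩
  · have hR := Submodule.reflection_sub h
    rw [sub_sub_sub_cancel_right] at hR
    rw [hA, hR, sub_add_cancel]
  · have hR : R (y - m) = y - m := (Submodule.reflection_eq_self_iff _).2
      (Submodule.mem_orthogonal_singleton_iff_inner_left.2 hy)
    rw [hA, hR, sub_add_cancel]

/-- A barrier on the half-ball `{y ∈ closedBall m r | 0 ≤ ⟪y - m, e⟫}`, where `e` is a unit vector: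
it has Laplacian `-(2 * finrank ℝ E * N)` and is at least `M` on the spherical part of the boundary.
The term in `⟪y - m, e⟫` cancels the Laplacian of `‖y - m‖ ^ 2`. -/
def halfBallBarrier (m e : E) (r M N : ℝ) (y : E) : ℝ :=
  M / r ^ 2 * (‖y - m‖ ^ 2 + finrank ℝ E * (⟪y - m, e⟫_ℝ * (r - ⟪y - m, e⟫_ℝ))) +
    N * (r ^ 2 - ‖y - m‖ ^ 2)

omit [FiniteDimensional ℝ E] in
theorem contDiff_halfBallBarrier (m e : E) (r M N : ℝ) :
    ContDiff ℝ 2 (halfBallBarrier m e r M N) := by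
  have hsq : ContDiff ℝ 2 fun y : E => ‖y - m‖ ^ 2 := (contDiff_id.sub contDiff_const).norm_sq ℝ
  have hinner : ContDiff ℝ 2 fun y : E => ⟪y - m, e⟫_ℝ :=
    (contDiff_id.sub contDiff_const).inner ℝ contDiff_const
  unfold halfBallBarrier
  fun_prop

theorem laplacian_halfBallBarrier {e : E} (he : ‖e‖ = 1) (m : E) (r M N : ℝ) (y : E) :
    Δ (halfBallBarrier m e r M N) y = -(2 * finrank ℝ E * N) := by
  let k : ℝ → ℝ := fun t => M / r ^ 2 * finrank ℝ E * (t * (r - t))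
  have hk : ContDiff ℝ 2 k := by fun_prop
  have hk' : deriv k = fun t => M / r ^ 2 * finrank ℝ E * (r - 2 * t) := by
    funext t
    refine (((hasDerivAt_id t).mul ((hasDerivAt_id t).const_sub r)).const_mul _).deriv.trans ?_
    simp only [id_eq, one_mul, mul_neg, mul_one]
    ring
  have hk'' (t : ℝ) : deriv (deriv k) t = M / r ^ 2 * finrank ℝ E * -2 := by
    rw [hk']
    simp
  have hsum : halfBallBarrier m e r M N =
      (fun y => N * r ^ 2 + (M / r ^ 2 - N) * ‖y - m‖ ^ 2) + fun y => k ⟪y - m, e⟫_ℝ := by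
    funext y
    simp only [halfBallBarrier, k, Pi.add_apply]
    ring
  have hsq : ContDiff ℝ 2 fun y : E => N * r ^ 2 + (M / r ^ 2 - N) * ‖y - m‖ ^ 2 :=
    contDiff_const.add (contDiff_const.mul ((contDiff_id.sub contDiff_const).norm_sq ℝ))
  have hinner : ContDiff ℝ 2 fun y : E => ⟪y - m, e⟫_ℝ :=
    (contDiff_id.sub contDiff_const).inner ℝ contDiff_const
  rw [hsum, hsq.contDiffAt.laplacian_add (f₂ := fun y => k ⟪y - m, e⟫_ℝ)
      (hk.comp hinner).contDiffAt,
    laplacian_const_add_mul_norm_sub_sq, laplacian_comp_inner_sub hk, hk'', he]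
  ring

omit [FiniteDimensional ℝ E] in
theorem mul_norm_sq_le_halfBallBarrier {m e y : E} {r M N : ℝ} (he : ‖e‖ = 1) (hM : 0 ≤ M)
    (hN : 0 ≤ N) (hy : y ∈ closedBall m r) (hye : 0 ≤ ⟪y - m, e⟫_ℝ) :
    M / r ^ 2 * ‖y - m‖ ^ 2 ≤ halfBallBarrier m e r M N y := by
  have hynorm : ‖y - m‖ ≤ r := mem_closedBall_iff_norm.1 hy
  have hyer : ⟪y - m, e⟫_ℝ ≤ r := (real_inner_le_norm _ _).trans (by simpa [he] using hynorm)
  have hsq : 0 ≤ r ^ 2 - ‖y - m‖ ^ 2 := sub_nonneg.2 (by gcongr)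
  have hye' : 0 ≤ ⟪y - m, e⟫_ℝ * (r - ⟪y - m, e⟫_ℝ) := mul_nonneg hye (sub_nonneg.2 hyer)
  calc M / r ^ 2 * ‖y - m‖ ^ 2
      ≤ M / r ^ 2 * (‖y - m‖ ^ 2 + finrank ℝ E * (⟪y - m, e⟫_ℝ * (r - ⟪y - m, e⟫_ℝ))) := by
        gcongr
        exact le_add_of_nonneg_right (mul_nonneg (Nat.cast_nonneg _) hye')
    _ ≤ halfBallBarrier m e r M N y := le_add_of_nonneg_right (mul_nonneg hN hsq)

theorem le_halfBallBarrier {m e : E} {r M N : ℝ} {v : E → ℝ} (he : ‖e‖ = 1) (hr : 0 < r)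
    (hN : 0 < N) (hv : ContinuousOn v (closedBall m r)) (hvM : ∀ y ∈ sphere m r, v y ≤ M)
    (hM : 0 ≤ M) (hv0 : ∀ y ∈ closedBall m r, ⟪y - m, e⟫_ℝ = 0 → v y ≤ 0)
    (hΔ : ∀ y ∈ ball m r, 0 < v y → ContDiffAt ℝ 2 v y ∧ -N ≤ Δ v y) {y : E}
    (hy : y ∈ closedBall m r) (hye : 0 ≤ ⟪y - m, e⟫_ℝ) : v y ≤ halfBallBarrier m e r M N y := by
  have : Nontrivial E := nontrivial_of_ne e 0 (by rintro rfl; simp at he)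
  have hd : (1 : ℝ) ≤ finrank ℝ E := Nat.one_le_cast.2 finrank_pos
  let W := halfBallBarrier m e r M N
  have hW : ContDiff ℝ 2 W := contDiff_halfBallBarrier m e r M N
  have hΔW (z : E) : Δ W z < -N := by
    rw [laplacian_halfBallBarrier he]
    nlinarith
  have hinner : Continuous fun y : E => ⟪y - m, e⟫_ℝ := by fun_prop
  refine le_of_forall_le_or_laplacian_lt (K := closedBall m r ∩ {y | 0 ≤ ⟪y - m, e⟫_ℝ})
    ((isCompact_closedBall m r).inter_right (isClosed_le continuous_const hinner))
    (hv.mono inter_subset_left) hW.continuous.continuousOn (fun z ⟨hzr, hze⟩ => ?_) y ⟨hy, hye⟩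
  have hMW : M / r ^ 2 * ‖z - m‖ ^ 2 ≤ W z := mul_norm_sq_le_halfBallBarrier he hM hN.le hzr hze
  rcases le_or_gt (v z) 0 with hvz | hvz
  · exact .inl (hvz.trans (le_trans (by positivity) hMW))
  rcases (mem_closedBall_iff_norm.1 hzr).eq_or_lt with hzr' | hzr'
  · refine .inl ((hvM z (mem_sphere_iff_norm.2 hzr')).trans (le_of_eq_of_le ?_ hMW))
    rw [hzr']
    field_simp
  · have hzb := mem_ball_iff_norm.2 hzr'
    have hze' : 0 < ⟪z - m, e⟫_ℝ := hze.lt_of_ne fun h => (hv0 z hzr h.symm).not_gt hvz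
    have hhalf : {y | 0 ≤ ⟪y - m, e⟫_ℝ} ∈ 𝓝 z :=
      mem_of_superset ((isOpen_lt continuous_const hinner).mem_nhds hze') fun _ => le_of_lt (α := ℝ)
    exact .inr ⟨inter_mem (closedBall_mem_nhds_of_mem hzb) hhalf, (hΔ z hzb hvz).1, hW.contDiffAt,
      (hΔW z).trans_le (hΔ z hzb hvz).2⟩

theorem sub_comp_le_halfBallBarrier {m e : E} {a r M N : ℝ} {u : E → ℝ} {A : E ≃ᵃⁱ[ℝ] E}
    (he : ‖e‖ = 1) (hAm : A m = m) (hA : ∀ y, ⟪y - m, e⟫_ℝ = 0 → A y = y) (hr : 0 < r) (hN : 0 < N)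
    (hu : ContinuousOn u (closedBall m r)) (hu0 : ∀ y ∈ closedBall m r, 0 ≤ u y)
    (huM : ∀ y ∈ closedBall m r, u y ≤ M) (hua : ∀ y ∈ closedBall m a, u y = 0)
    (hΔ : ∀ y ∈ ball m r \ closedBall m a, ContDiffAt ℝ 2 u y ∧ -N ≤ Δ u y ∧ Δ u y ≤ 0) {y : E}
    (hy : y ∈ closedBall m r) (hye : 0 ≤ ⟪y - m, e⟫_ℝ) :
    u y - u (A y) ≤ halfBallBarrier m e r M N y := by
  have hAdist (y : E) : dist (A y) m = dist y m := by simpa [hAm] using A.dist_map y m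
  have hAr : MapsTo A (closedBall m r) (closedBall m r) := fun y hy => by simpa [hAdist] using hy
  have hM : 0 ≤ M := (hu0 m (mem_closedBall_self hr.le)).trans (huM m (mem_closedBall_self hr.le))
  refine le_halfBallBarrier (v := u - u ∘ A) he hr hN
    (hu.sub (hu.comp A.continuous.continuousOn hAr)) (fun z hz => ?_) hM (fun z _ hze => ?_)
    (fun z hz hvz => ?_) hy hye
  · have hzr := sphere_subset_closedBall hz
    exact (sub_le_self _ (hu0 _ (hAr hzr))).trans (huM z hzr)
  · simp [hA z hze]
  · have hAzr : A z ∈ ball m r := by simpa [hAdist] using hz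
    have hza : z ∉ closedBall m a := fun hza => by
      simp [hua z hza, (hu0 _ (ball_subset_closedBall hAzr)).not_gt] at hvz
    have hAza : A z ∉ closedBall m a := by simpa [hAdist] using hza
    obtain ⟨hcont, hNle, -⟩ := hΔ z ⟨hz, hza⟩
    obtain ⟨hcontA, -, hle⟩ := hΔ (A z) ⟨hAzr, hAza⟩
    have hcomp : ContDiffAt ℝ 2 (u ∘ A) z :=
      hcontA.comp z A.toAffineIsometry.toContinuousAffineMap.contDiff.contDiffAt
    refine ⟨hcont.sub hcomp, ?_⟩
    rw [hcont.laplacian_sub hcomp, laplacian_comp_affineIsometryEquiv]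
    linarith

theorem sub_le_of_mem_sphere {m p₁ p₂ : E} {a r s M N : ℝ} {u : E → ℝ} (hr : 0 < r) (hsr : s ≤ r)
    (hN : 0 < N) (hu : ContinuousOn u (closedBall m r)) (hu0 : ∀ y ∈ closedBall m r, 0 ≤ u y)
    (huM : ∀ y ∈ closedBall m r, u y ≤ M) (hua : ∀ y ∈ closedBall m a, u y = 0)
    (hΔ : ∀ y ∈ ball m r \ closedBall m a, ContDiffAt ℝ 2 u y ∧ -N ≤ Δ u y ∧ Δ u y ≤ 0)
    (hp₁ : p₁ ∈ sphere m s) (hp₂ : p₂ ∈ sphere m s) :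
    u p₁ - u p₂ ≤ M / r ^ 2 * (s ^ 2 + finrank ℝ E * (r * s)) + N * r ^ 2 := by
  have hs : 0 ≤ s := dist_nonneg.trans_eq hp₁
  have hM : 0 ≤ M := (hu0 m (mem_closedBall_self hr.le)).trans (huM m (mem_closedBall_self hr.le))
  rcases eq_or_ne p₁ p₂ with rfl | hne
  · rw [sub_self]
    positivity
  have hnorm₁ : ‖p₁ - m‖ = s := mem_sphere_iff_norm.1 hp₁
  have hnorm₂ : ‖p₂ - m‖ = s := mem_sphere_iff_norm.1 hp₂
  obtain ⟨A, hAp₁, hAm, hA⟩ := exists_affineIsometryEquiv_swap (hnorm₁.trans hnorm₂.symm)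
  have hp : 0 < ‖p₁ - p₂‖ := norm_pos_iff.2 (sub_ne_zero.2 hne)
  let e := ‖p₁ - p₂‖⁻¹ • (p₁ - p₂)
  have he : ‖e‖ = 1 := norm_smul_inv_norm (𝕜 := ℝ) (sub_ne_zero.2 hne)
  have hinner (y : E) : ⟪y - m, e⟫_ℝ = ‖p₁ - p₂‖⁻¹ * ⟪y - m, p₁ - p₂⟫_ℝ := real_inner_smul_right ..
  set g := ⟪p₁ - m, e⟫_ℝ with hg
  have hg0 : 0 ≤ g := by
    have hle := real_inner_le_norm (p₁ - m) (p₂ - m)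
    rw [hg, hinner, ← sub_sub_sub_cancel_right p₁ p₂ m, inner_sub_right,
      real_inner_self_eq_norm_sq]
    rw [hnorm₁, hnorm₂] at hle
    rw [hnorm₁]
    exact mul_nonneg (by positivity) (by linarith)
  have hgs : g ≤ s := by simpa [he, hnorm₁] using real_inner_le_norm (p₁ - m) e
  calc u p₁ - u p₂ = u p₁ - u (A p₁) := by rw [hAp₁]
    _ ≤ M / r ^ 2 * (s ^ 2 + finrank ℝ E * (g * (r - g))) + N * (r ^ 2 - s ^ 2) := by
      simpa only [halfBallBarrier, hnorm₁] using sub_comp_le_halfBallBarrier he hAm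
        (fun y hy => hA y (by simpa [hinner, hp.ne'] using hy)) hr hN hu hu0 huM hua hΔ
        (hp₁.trans_le hsr) hg0
    _ ≤ M / r ^ 2 * (s ^ 2 + finrank ℝ E * (r * s)) + N * r ^ 2 := by
      have hgr : g * (r - g) ≤ r * s := by nlinarith
      have hrs : r ^ 2 - s ^ 2 ≤ r ^ 2 := sub_le_self _ (sq_nonneg s)
      gcongr

end Laplacian

/-! ### Perforated domains and the eigenvalue problem -/

section Lattice

open scoped Pointwise

variable {n : ℕ} {ε a : ℝ}

theorem le_dist_of_mem_latticePts (hε : 0 ≤ ε) {m m' : Eucl n} (hm : m ∈ latticePts n ε)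
    (hm' : m' ∈ latticePts n ε) (hne : m ≠ m') : ε ≤ dist m m' := by
  obtain ⟨i, hi⟩ : ∃ i, m i ≠ m' i := by
    by_contra! h
    exact hne (PiLp.ext h)
  obtain ⟨z, hz⟩ := hm i
  obtain ⟨z', hz'⟩ := hm' i
  have hzz' : 1 ≤ |z - z'| := Int.one_le_abs (sub_ne_zero.2 fun h => hi (by rw [hz, hz', h]))
  calc ε ≤ ε * |((z - z' : ℤ) : ℝ)| := le_mul_of_one_le_right hε (mod_cast hzz')
    _ = ‖(m - m') i‖ := by
      rw [PiLp.sub_apply, hz, hz', ← mul_sub, Real.norm_eq_abs, abs_mul, abs_of_nonneg hε,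
        Int.cast_sub]
    _ ≤ dist m m' := dist_eq_norm m m' ▸ PiLp.norm_apply_le (m - m') i

theorem isClosed_holes (n : ℕ) (hε : 0 < ε) (a : ℝ) : IsClosed (holes n ε a) := by
  have hlattice : IsClosed (latticePts n ε) := isClosed_of_pairwise_le_dist hε
    fun _ hm _ hm' hne => le_dist_of_mem_latticePts hε.le hm hm' hne
  have hadd : holes n ε a = latticePts n ε + closedBall 0 a := by
    simp [holes, ← Set.iUnion_add_left_image]
  rw [hadd]
  exact hlattice.add_right_of_isCompact (isCompact_closedBall 0 a)

theorem notMem_holes_of_notMem_closedBall (hε : 0 ≤ ε) (ha : a ≤ ε / 2) {m x : Eucl n}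
    (hm : m ∈ latticePts n ε) (hx : x ∈ ball m (ε / 2)) (hxa : x ∉ closedBall m a) :
    x ∉ holes n ε a := by
  intro hxh
  simp only [holes, mem_iUnion, exists_prop] at hxh
  obtain ⟨m', hm', hxm'⟩ := hxh
  have hne : m ≠ m' := fun h => hxa (h ▸ hxm')
  have hdist := le_dist_of_mem_latticePts hε hm hm' hne
  rw [mem_ball] at hx
  rw [mem_closedBall] at hxm'
  linarith [dist_triangle_left m m' x]

end Lattice

section EigenvalueProblem

open Laplacian

theorem lap_eq_laplacian {n : ℕ} {u : Eucl n → ℝ} {x : Eucl n} (hu : ContDiffAt ℝ 2 u x) :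
    lap u x = Δ u x := by
  have hu' : DifferentiableAt ℝ (fderiv ℝ u) x :=
    (hu.fderiv_right (m := 1) (by norm_num)).differentiableAt one_ne_zero
  rw [laplacian_eq_sum_fderiv_fderiv (EuclideanSpace.basisFun (Fin n) ℝ)]
  simp [lap, fderiv_clm_apply hu' (differentiableAt_const _)]

namespace IsEVSol

variable {n : ℕ} {Ω : Set (Eucl n)} {ε a p M : ℝ} {φ : Eucl n → ℝ}

theorem nonneg (hφ : IsEVSol n Ω ε a p φ) (x : Eucl n) : 0 ≤ φ x := by
  obtain ⟨-, -, -, hpos, hzero⟩ := hφ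
  by_cases hx : x ∈ Ω \ holes n ε a
  · exact (hpos x hx).le
  · exact (hzero x hx).ge

theorem mem_of_pos (hφ : IsEVSol n Ω ε a p φ) {x : Eucl n} (hx : 0 < φ x) :
    x ∈ Ω \ holes n ε a := by
  obtain ⟨-, -, -, -, hzero⟩ := hφ
  exact by_contra fun h => hx.ne' (hzero x h)

theorem eq_zero_of_mem_closedBall (hφ : IsEVSol n Ω ε a p φ) {m x : Eucl n}
    (hm : m ∈ latticePts n ε) (hx : x ∈ closedBall m a) : φ x = 0 := by
  obtain ⟨-, -, -, -, hzero⟩ := hφ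
  exact hzero x fun h => h.2 (mem_biUnion hm hx)

theorem contDiffAt (hφ : IsEVSol n Ω ε a p φ) (hΩo : IsOpen Ω) (hε : 0 < ε) {x : Eucl n}
    (hx : x ∈ Ω \ holes n ε a) : ContDiffAt ℝ 2 φ x := by
  obtain ⟨-, hdiff, -⟩ := hφ
  exact hdiff.contDiffAt ((hΩo.sdiff (isClosed_holes n hε a)).mem_nhds hx)

theorem laplacian_eq (hφ : IsEVSol n Ω ε a p φ) (hΩo : IsOpen Ω) (hε : 0 < ε) {x : Eucl n}
    (hx : x ∈ Ω \ holes n ε a) : Δ φ x = -φ x ^ p := by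
  rw [← lap_eq_laplacian (hφ.contDiffAt hΩo hε hx)]
  obtain ⟨-, -, heq, -⟩ := hφ
  exact eq_neg_of_add_eq_zero_left (heq x hx)

theorem neg_rpow_le_laplacian (hφ : IsEVSol n Ω ε a p φ) (hΩo : IsOpen Ω) (hε : 0 < ε) (hp : 0 ≤ p)
    {x : Eucl n} (hx : x ∈ Ω \ holes n ε a) (hM : φ x ≤ M) : -M ^ p ≤ Δ φ x := by
  rw [hφ.laplacian_eq hΩo hε hx]
  exact neg_le_neg (Real.rpow_le_rpow (hφ.nonneg x) hM hp)

theorem isDirichletSubsol (hφ : IsEVSol n Ω ε a p φ) (hΩo : IsOpen Ω) (hε : 0 < ε) (hp : 0 ≤ p)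
    (hM : ∀ x ∈ Ω, φ x ≤ M) : IsDirichletSubsol Ω (M ^ p) φ where
  continuousOn := hφ.1
  mem_of_pos _ _ hx := (hφ.mem_of_pos hx).1
  contDiffAt_of_pos _ _ hx := hφ.contDiffAt hΩo hε (hφ.mem_of_pos hx)
  le_laplacian_of_pos x hxΩ hx :=
    hφ.neg_rpow_le_laplacian hΩo hε hp (hφ.mem_of_pos hx) (hM x hxΩ)

theorem exists_le [NeZero n] (hΩo : IsOpen Ω) (hΩb : Bornology.IsBounded Ω) (hp0 : 0 ≤ p)
    (hp1 : p < 1) : ∃ M > 0, ∀ ε > 0, ∀ a φ, IsEVSol n Ω ε a p φ → ∀ x, φ x ≤ M := by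
  obtain ⟨R, hR, hΩR⟩ := hΩb.closure.subset_closedBall_lt 0 0
  refine ⟨(R ^ 2) ^ (1 - p)⁻¹, by positivity, fun ε hε a φ hφ x => ?_⟩
  rcases le_or_gt (φ x) 0 with hx | hx
  · exact hx.trans (by positivity)
  have hxΩ : x ∈ closure Ω := subset_closure (hφ.mem_of_pos hx).1
  obtain ⟨z, hz, hzmax⟩ := hΩb.isCompact_closure.exists_isMaxOn ⟨x, hxΩ⟩ hφ.1
  have hS : 0 < φ z := hx.trans_le (hzmax hxΩ)
  -- Since the source is sublinear, this bounds the maximum `φ z` by a power of `R`.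
  have hSR : φ z ≤ φ z ^ p * R ^ 2 :=
    (hφ.isDirichletSubsol hΩo hε hp0 fun y hy => hzmax (subset_closure hy)).le_mul_sq hΩo hΩR
      (by positivity) z hz
  refine (hzmax hxΩ).trans ?_
  rw [Real.le_rpow_inv_iff_of_pos hS.le (by positivity) (sub_pos.2 hp1), Real.rpow_sub hS,
    Real.rpow_one, div_le_iff₀' (by positivity)]
  exact hSR

theorem exists_le_mul_dist (hΩo : IsOpen Ω) (hΩb : Bornology.IsBounded Ω)
    (hΩs : HasSmoothBoundary Ω) (hp : 0 ≤ p) (M : ℝ) :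
    ∃ L ≥ 0, ∀ ε > 0, ∀ a φ, IsEVSol n Ω ε a p φ → (∀ x, φ x ≤ M) →
      ∀ x, ∀ y ∉ Ω, φ x ≤ L * dist x y := by
  obtain ⟨f, hf, hΩf, hf'⟩ := hΩs
  obtain ⟨w, hw⟩ :=
    exists_isBoundaryBarrier_of_fderiv_ne_zero hΩb (contDiff_infty.1 hf 2) hΩf hf'
  obtain ⟨L, hL, hLdist⟩ := IsDirichletSubsol.exists_le_mul_dist hΩo hΩb hw M (M ^ p)
  refine ⟨L, hL, fun ε hε a φ hφ hM x y hy => ?_⟩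
  rcases le_or_gt (φ x) 0 with hx | hx
  · exact hx.trans (by positivity)
  · exact hLdist φ (hφ.isDirichletSubsol hΩo hε hp fun x _ => hM x) (fun x _ => hM x) x
      (hφ.mem_of_pos hx).1 y hy

theorem sub_le_of_closedBall_subset (hφ : IsEVSol n Ω ε a p φ) (hΩo : IsOpen Ω) (hε : 0 < ε)
    (hp : 0 ≤ p) (hM0 : 0 < M) (hM : ∀ x, φ x ≤ M) {m p₁ p₂ : Eucl n} {s : ℝ}
    (hm : m ∈ latticePts n ε) (hmΩ : closedBall m (ε / 2) ⊆ Ω) (ha : a ≤ ε / 2) (hs : s ≤ ε / 2)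
    (hp₁ : p₁ ∈ sphere m s) (hp₂ : p₂ ∈ sphere m s) :
    φ p₁ - φ p₂ ≤ 2 * M * (n + 1) * (s / ε) + M ^ p * ε ^ 2 := by
  have hcell : ∀ y ∈ ball m (ε / 2) \ closedBall m a, y ∈ Ω \ holes n ε a := fun y hy =>
    ⟨hmΩ (ball_subset_closedBall hy.1),
      notMem_holes_of_notMem_closedBall hε.le ha hm hy.1 hy.2⟩
  have hcellΔ : ∀ y ∈ ball m (ε / 2) \ closedBall m a,
      ContDiffAt ℝ 2 φ y ∧ -M ^ p ≤ Δ φ y ∧ Δ φ y ≤ 0 := fun y hy =>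
    ⟨hφ.contDiffAt hΩo hε (hcell y hy), hφ.neg_rpow_le_laplacian hΩo hε hp (hcell y hy) (hM y),
      (hφ.laplacian_eq hΩo hε (hcell y hy)).trans_le
        (neg_nonpos.2 (Real.rpow_nonneg (hφ.nonneg y) p))⟩
  have hsub := sub_le_of_mem_sphere (half_pos hε) hs (Real.rpow_pos_of_pos hM0 p)
    (hφ.1.mono (hmΩ.trans subset_closure)) (fun y _ => hφ.nonneg y) (fun y _ => hM y)
    (fun y hy => hφ.eq_zero_of_mem_closedBall hm hy) hcellΔ hp₁ hp₂
  rw [finrank_euclideanSpace_fin] at hsub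
  have hs0 : 0 ≤ s := dist_nonneg.trans_eq hp₁
  have hs2 : s ^ 2 ≤ ε / 2 * s := by nlinarith
  calc φ p₁ - φ p₂ ≤ M / (ε / 2) ^ 2 * (s ^ 2 + n * (ε / 2 * s)) + M ^ p * (ε / 2) ^ 2 := hsub
    _ ≤ M / (ε / 2) ^ 2 * (ε / 2 * s + n * (ε / 2 * s)) + M ^ p * ε ^ 2 := by
      gcongr
      linarith
    _ = 2 * M * (n + 1) * (s / ε) + M ^ p * ε ^ 2 := by
      field_simp
      ring

theorem sub_le (hφ : IsEVSol n Ω ε a p φ) (hΩo : IsOpen Ω) (hε : ε ∈ Ioc 0 1) (hp : 0 ≤ p)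
    (hM0 : 0 < M) (hM : ∀ x, φ x ≤ M) {L : ℝ} (hL0 : 0 ≤ L)
    (hL : ∀ x, ∀ y ∉ Ω, φ x ≤ L * dist x y) {m p₁ p₂ : Eucl n} {s : ℝ} (hm : m ∈ latticePts n ε)
    (hp₁ : p₁ ∈ sphere m s) (hp₂ : p₂ ∈ sphere m s) :
    φ p₁ - φ p₂ ≤ 2 * M * (n + 1) * (s / ε) + (M ^ p + L) * ε := by
  obtain ⟨hε0, hε1⟩ := hε
  have hs : 0 ≤ s := dist_nonneg.trans_eq hp₁
  have hφp₁ : φ p₁ - φ p₂ ≤ φ p₁ := sub_le_self _ (hφ.nonneg p₂)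
  have hLε : 0 ≤ L * ε := by positivity
  have hMε : 0 ≤ M ^ p * ε := by positivity
  rcases le_or_gt s a with hsa | hsa
  · have hφ0 : φ p₁ = 0 := hφ.eq_zero_of_mem_closedBall hm (hp₁.trans_le hsa)
    exact (hφp₁.trans_eq hφ0).trans (by positivity)
  rcases le_or_gt (ε / 2) s with hsε | hsε
  · have hM' : M ≤ M * (n + 1) * (2 * (s / ε)) := by
      rw [mul_assoc]
      refine le_mul_of_one_le_right hM0.le (one_le_mul_of_one_le_of_one_le (by simp) ?_)
      rw [← mul_div_assoc, one_le_div hε0]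
      linarith
    linarith [hM p₁]
  by_cases hmΩ : closedBall m (ε / 2) ⊆ Ω
  · have hcell := hφ.sub_le_of_closedBall_subset hΩo hε0 hp hM0 hM hm hmΩ (hsa.trans hsε).le hsε.le
      hp₁ hp₂
    have hε2 : M ^ p * ε ^ 2 ≤ M ^ p * ε := by
      gcongr
      exact pow_le_of_le_one hε0.le hε1 two_ne_zero
    linarith
  · obtain ⟨y, hy, hyΩ⟩ := not_subset.1 hmΩ
    have hdist : dist p₁ y ≤ ε := by
      rw [mem_sphere] at hp₁
      rw [mem_closedBall] at hy
      linarith [dist_triangle_right p₁ y m]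
    have hdecay : φ p₁ ≤ L * ε := (hL p₁ y hyΩ).trans (by gcongr)
    have : 0 ≤ 2 * M * (n + 1) * (s / ε) := by positivity
    linarith

theorem exists_abs_sub_le [NeZero n] (hΩo : IsOpen Ω) (hΩb : Bornology.IsBounded Ω)
    (hΩs : HasSmoothBoundary Ω) (hp0 : 0 ≤ p) (hp1 : p < 1) :
    ∃ C ≥ 0, ∀ ε ∈ Ioc (0 : ℝ) 1, ∀ a φ, IsEVSol n Ω ε a p φ → ∀ m ∈ latticePts n ε, ∀ s,
      ∀ p₁ ∈ sphere m s, ∀ p₂ ∈ sphere m s, |φ p₁ - φ p₂| ≤ C * (s / ε + ε) := by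
  obtain ⟨M, hM0, hM⟩ := exists_le hΩo hΩb hp0 hp1
  obtain ⟨L, hL0, hL⟩ := exists_le_mul_dist hΩo hΩb hΩs hp0 M
  refine ⟨2 * M * (n + 1) + (M ^ p + L), by positivity, ?_⟩
  intro ε hε a φ hφ m hm s
  suffices h : ∀ p₁ ∈ sphere m s, ∀ p₂ ∈ sphere m s,
      φ p₁ - φ p₂ ≤ (2 * M * (n + 1) + (M ^ p + L)) * (s / ε + ε) from
    fun p₁ hp₁ p₂ hp₂ => abs_sub_le_iff.2 ⟨h p₁ hp₁ p₂ hp₂, h p₂ hp₂ p₁ hp₁⟩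
  intro p₁ hp₁ p₂ hp₂
  have hφM := hM ε hε.1 a φ hφ
  have hsub := hφ.sub_le hΩo hε hp0 hM0 hφM hL0 (hL ε hε.1 a φ hφ hφM) hm hp₁ hp₂
  have : 0 ≤ (M ^ p + L) * (s / ε) + 2 * M * (n + 1) * ε := by
    have hs : 0 ≤ s := dist_nonneg.trans_eq hp₁
    have hε0 : 0 ≤ ε := hε.1.le
    positivity
  linarith

end IsEVSol

end EigenvalueProblem

theorem sqrt_mul_aStar_div_two_le {n : ℕ} (hn : 3 ≤ n) {ε : ℝ} (hε : 0 < ε) :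
    √(ε * aStar n ε / 2) ≤ ε * ε ^ (1 / ((n : ℝ) - 2)) := by
  have hn2 : (0 : ℝ) < n - 2 := by
    have : (3 : ℝ) ≤ n := mod_cast hn
    linarith
  have hexp : (n : ℝ) / (n - 2) = 1 + 1 / (n - 2) * 2 := by
    field_simp
    ring
  have hsq : ε * aStar n ε = (ε * ε ^ (1 / ((n : ℝ) - 2))) ^ 2 := by
    rw [aStar, hexp, Real.rpow_add hε, Real.rpow_one, Real.rpow_mul hε.le, Real.rpow_two]
    ring
  refine Real.sqrt_le_iff.2 ⟨by positivity, ?_⟩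
  rw [← hsq]
  exact half_le_self (by unfold aStar; positivity)

theorem exists_abs_sub_le_rpow {n : ℕ} (hn : 3 ≤ n) {Ω : Set (Eucl n)} (hΩo : IsOpen Ω)
    (hΩb : Bornology.IsBounded Ω) (hΩs : HasSmoothBoundary Ω) {p : ℝ} (hp0 : 0 ≤ p) (hp1 : p < 1) :
    ∃ C, ∀ ε ∈ Ioc (0 : ℝ) 1, ∀ φ, IsEVSol n Ω ε (aStar n ε) p φ → ∀ m ∈ latticePts n ε,
      ∀ p₁ ∈ sphere m √(ε * aStar n ε / 2), ∀ p₂ ∈ sphere m √(ε * aStar n ε / 2),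
        |φ p₁ - φ p₂| ≤ C * ε ^ (1 / ((n : ℝ) - 2)) := by
  have : NeZero n := ⟨by lia⟩
  have hn2 : (1 : ℝ) ≤ n - 2 := by
    have : (3 : ℝ) ≤ n := mod_cast hn
    linarith
  obtain ⟨C, hC0, hC⟩ := IsEVSol.exists_abs_sub_le hΩo hΩb hΩs hp0 hp1
  refine ⟨C * 2, fun ε hε φ hφ m hm p₁ hp₁ p₂ hp₂ => ?_⟩
  have hsε : √(ε * aStar n ε / 2) / ε ≤ ε ^ (1 / ((n : ℝ) - 2)) :=
    (div_le_iff₀' hε.1).2 (sqrt_mul_aStar_div_two_le hn hε.1)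
  have hε' : ε ≤ ε ^ (1 / ((n : ℝ) - 2)) :=
    Real.self_le_rpow_of_le_one hε.1.le hε.2 (div_le_one_of_le₀ hn2 (by linarith))
  calc |φ p₁ - φ p₂| ≤ C * (√(ε * aStar n ε / 2) / ε + ε) := hC ε hε _ φ hφ m hm _ p₁ hp₁ p₂ hp₂
    _ ≤ C * (ε ^ (1 / ((n : ℝ) - 2)) + ε ^ (1 / ((n : ℝ) - 2))) := by gcongr
    _ = C * 2 * ε ^ (1 / ((n : ℝ) - 2)) := by ring

theorem isLittleO_rpow_rpow_nhdsGT_zero {b c : ℝ} (hbc : b < c) :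
    (fun t : ℝ => t ^ c) =o[𝓝[>] 0] fun t => t ^ b := by
  have hlim : Tendsto (fun t : ℝ => t ^ (c - b)) (𝓝[>] 0) (𝓝 0) := by
    simpa [Real.zero_rpow (sub_pos.2 hbc).ne'] using
      (Real.continuousAt_rpow_const 0 (c - b) (.inr (sub_nonneg.2 hbc.le))).tendsto.mono_left
        nhdsWithin_le_nhds
  refine (isLittleO_iff_tendsto' ?_).2 (hlim.congr' ?_) <;>
    filter_upwards [self_mem_nhdsWithin] with t ht
  · exact fun h => absurd h (Real.rpow_pos_of_pos ht b).ne'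
  · exact Real.rpow_sub ht c b

theorem ev_oscillation_sphere_general
    (n : ℕ) (hn : 3 ≤ n) (Ω : Set (Eucl n)) (hΩo : IsOpen Ω) (hΩb : Bornology.IsBounded Ω)
    (hΩs : HasSmoothBoundary Ω) (p : ℝ) (hp0 : 0 ≤ p) (hp1 : p < 1) (Φ : ℝ → Eucl n → ℝ)
    (hΦ : ∀ ε ∈ Ioo (0 : ℝ) 1, IsEVSol n Ω ε (aStar n ε) p (Φ ε)) :
    ∃ γ : ℝ, 0 < γ ∧ γ < 1 ∧ ∃ η : ℝ → ℝ,
      η =o[𝓝[>] (0 : ℝ)] (fun ε => ε ^ γ) ∧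
      ∀ ε ∈ Ioo (0 : ℝ) 1, ∀ m ∈ latticePts n ε,
        ∀ p₁ ∈ sphere m √(ε * aStar n ε / 2), ∀ p₂ ∈ sphere m √(ε * aStar n ε / 2),
          |Φ ε p₁ - Φ ε p₂| ≤ η ε := by
  obtain ⟨C, hC⟩ := exists_abs_sub_le_rpow hn hΩo hΩb hΩs hp0 hp1
  have hn2 : (1 : ℝ) ≤ n - 2 := by
    have : (3 : ℝ) ≤ n := mod_cast hn
    linarith
  have hγ0 : 0 < 1 / ((n : ℝ) - 2) := by positivity
  have hγ1 : 1 / ((n : ℝ) - 2) ≤ 1 := div_le_one_of_le₀ hn2 (by linarith)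
  exact ⟨1 / ((n : ℝ) - 2) / 2, half_pos hγ0, by linarith, fun ε => C * ε ^ (1 / ((n : ℝ) - 2)),
    (isLittleO_rpow_rpow_nhdsGT_zero (half_lt_self hγ0)).const_mul_left C,
    fun ε hε => hC ε (Ioo_subset_Ioc_self hε) (Φ ε) (hΦ ε hε)⟩

/-- almost flatness on spheres: with ā_ε = (ε a*_ε/2)^{1/2}, there is
0 < γ < 1 such that the oscillation of φ_ε over ∂B_{ā_ε}(m) is o(ε^γ) for every
m ∈ εℤⁿ ∩ Ω. -/
theorem ev_oscillation_sphere
    (n : ℕ) (hn : 3 ≤ n)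
    (Ω : Set (Eucl n)) (hΩo : IsOpen Ω) (hΩb : Bornology.IsBounded Ω)
    (hΩc : IsConnected Ω) (hΩs : HasSmoothBoundary Ω)
    (p : ℝ) (hp0 : 0 < p) (hp1 : p < 1)
    (Φ : ℝ → Eucl n → ℝ)
    (hΦ : ∀ ε ∈ Ioo (0:ℝ) 1, IsEVSol n Ω ε (aStar n ε) p (Φ ε))
    :
    ∃ γ : ℝ, 0 < γ ∧ γ < 1 ∧ ∃ η : ℝ → ℝ,
      η =o[𝓝[>] (0:ℝ)] (fun ε => ε ^ γ) ∧
      ∀ ε ∈ Ioo (0:ℝ) 1, ∀ m ∈ latticePts n ε ∩ Ω,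
        ∀ p₁ ∈ sphere m (Real.sqrt (ε * aStar n ε / 2)),
        ∀ p₂ ∈ sphere m (Real.sqrt (ε * aStar n ε / 2)),
          |Φ ε p₁ - Φ ε p₂| ≤ η ε := by
  obtain ⟨γ, hγ0, hγ1, η, hη, h⟩ :=
    ev_oscillation_sphere_general n hn Ω hΩo hΩb hΩs p hp0.le hp1 Φ hΦ
  exact ⟨γ, hγ0, hγ1, η, hη, fun ε hε m hm => h ε hε m hm.1⟩

end
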